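/- Let r > 0 and ε ∈ (0,1). Let a and F be continuous on the closed half-ball B̄_{2r}⁺ with |a| ≤ 1 and F ≤ −ε on B̄_{2r}⁺, and let H be continuous on Γ̄_{2r} with H ≤ −ε. If v is a C² function on B̄_{2r}⁺ solving −Δv = a + F e^{2v} in B_{2r}⁺ and ∂v/∂ν = H e^{v} on Γ_{2r}, then there exists a constant C depending only on r and ε (and not on v, a, F, H) such that ∫_{B_r⁺} ( |∇v⁺|² + (v⁺)⁴ ) dx + ∫_{Γ_r} (v⁺)² dl ≤ C, where v⁺ = max(v, 0). -/

import Mathlib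

open MeasureTheory Filter

noncomputable section

/-- Euclidean norm on `ℝ × ℝ`. -/
def nrm (p : ℝ × ℝ) : ℝ := Real.sqrt (p.1 ^ 2 + p.2 ^ 2)

/-- Euclidean Laplacian `Δw = ∂²w/∂s² + ∂²w/∂t²` of `w : ℝ × ℝ → ℝ`. -/
def lap (w : ℝ × ℝ → ℝ) (p : ℝ × ℝ) : ℝ :=
  deriv (fun s => deriv (fun s' => w (s', p.2)) s) p.1 +
    deriv (fun t => deriv (fun t' => w (p.1, t')) t) p.2

/-- The open upper half-ball `B_r⁺` of radius `r` centered at `0`. -/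
def ballPlus (r : ℝ) : Set (ℝ × ℝ) := {p | nrm p < r ∧ 0 < p.2}

/-- The closed upper half-ball `B̄_r⁺` of radius `r` centered at `0`. -/
def cballPlus (r : ℝ) : Set (ℝ × ℝ) := {p | nrm p ≤ r ∧ 0 ≤ p.2}

/-- Squared Euclidean gradient `|∇u|² = (∂u/∂s)² + (∂u/∂t)²`. -/
def gradSq (u : ℝ × ℝ → ℝ) (p : ℝ × ℝ) : ℝ :=
  (deriv (fun s => u (s, p.2)) p.1) ^ 2 + (deriv (fun t => u (p.1, t)) p.2) ^ 2

/-!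
If `Δv ≥ ε e^{2v} - 1` and `∂v/∂t ≥ ε e^v` on the flat boundary, then `w = e^v` satisfies
`Δw ≥ e^v |∇v|² + ε w³ - w` and `∂w/∂t ≥ ε w²`. Test this with `η³`, where `η` is a cutoff function
on a rectangle between the two half-balls: Green's identity produces no other boundary terms, and
the errors caused by `∇η` and by `-w` are of order `η w`, which Young's inequality absorbs into
`ε (η w)³`. This bounds `∫ (e^v |∇v|² + ε e^{3v})` and, on the flat boundary, `∫ ε e^{2v}`
independently of `v`, and these integrands dominate those in the claim wherever `v > 0`.
-/

section

open Set Topology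

lemma hasDerivAt_mk_left (t x : ℝ) : HasDerivAt (fun s : ℝ => (s, t)) ((1 : ℝ), (0 : ℝ)) x :=
  (hasDerivAt_id x).prodMk (hasDerivAt_const x t)

lemma hasDerivAt_mk_right (s x : ℝ) : HasDerivAt (fun t : ℝ => (s, t)) ((0 : ℝ), (1 : ℝ)) x :=
  (hasDerivAt_const x s).prodMk (hasDerivAt_id x)

lemma deriv_deriv_comp_of_hasDerivAt_const {E G : Type*} [NormedAddCommGroup E] [NormedSpace ℝ E]
    [NormedAddCommGroup G] [NormedSpace ℝ G] {ℓ : ℝ → E} {e : E} {w : E → G} {x : ℝ}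
    (hℓ : ∀ y, HasDerivAt ℓ e y) (hw : ContDiffAt ℝ 2 w (ℓ x)) :
    deriv (fun y => deriv (fun z => w (ℓ z)) y) x = fderiv ℝ (fderiv ℝ w) (ℓ x) e e := by
  have hw_near : ∀ᶠ y in 𝓝 x, ContDiffAt ℝ 2 w (ℓ y) :=
    (hℓ x).continuousAt.eventually (hw.eventually (by simp))
  have hfirst : (fun y => deriv (fun z => w (ℓ z)) y) =ᶠ[𝓝 x] fun y => fderiv ℝ w (ℓ y) e := by
    filter_upwards [hw_near] with y hy
    exact ((hy.differentiableAt two_ne_zero).hasFDerivAt.comp_hasDerivAt y (hℓ y)).deriv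
  have hsecond : HasFDerivAt (fderiv ℝ w) (fderiv ℝ (fderiv ℝ w) (ℓ x)) (ℓ x) :=
    ((hw.fderiv_right (m := 1) one_add_one_eq_two.le).differentiableAt one_ne_zero).hasFDerivAt
  rw [hfirst.deriv_eq]
  simpa using ((hsecond.comp_hasDerivAt x (hℓ x)).clm_apply (hasDerivAt_const x e)).deriv

/-! ### Gradient and Laplacian within a set -/

/-- The inner product `∇u · ∇w` of gradients taken within `S`. On a closed region with nonempty
interior it is continuous up to the boundary whenever `u` and `w` are `C¹` there. -/
def gradInnerWithin (S : Set (ℝ × ℝ)) (u w : ℝ × ℝ → ℝ) (p : ℝ × ℝ) : ℝ :=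
  fderivWithin ℝ u S p (1, 0) * fderivWithin ℝ w S p (1, 0) +
    fderivWithin ℝ u S p (0, 1) * fderivWithin ℝ w S p (0, 1)

/-- The Laplacian of `w` taken within `S`, the analogue of `lap` that is continuous up to the
boundary of a closed region on which `w` is `C²`. -/
def lapWithin (S : Set (ℝ × ℝ)) (w : ℝ × ℝ → ℝ) (p : ℝ × ℝ) : ℝ :=
  fderivWithin ℝ (fderivWithin ℝ w S) S p (1, 0) (1, 0) +
    fderivWithin ℝ (fderivWithin ℝ w S) S p (0, 1) (0, 1)

variable {S : Set (ℝ × ℝ)} {p : ℝ × ℝ} {u v w η : ℝ × ℝ → ℝ}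

lemma gradSq_eq_fderiv (hw : DifferentiableAt ℝ w p) :
    gradSq w p = fderiv ℝ w p (1, 0) ^ 2 + fderiv ℝ w p (0, 1) ^ 2 := by
  have hs := hw.hasFDerivAt.comp_hasDerivAt p.1 (hasDerivAt_mk_left p.2 p.1)
  have ht := hw.hasFDerivAt.comp_hasDerivAt p.2 (hasDerivAt_mk_right p.1 p.2)
  exact congrArg₂ (· ^ 2 + · ^ 2) hs.deriv ht.deriv

lemma gradSq_eq_gradInnerWithin (hw : ContDiffOn ℝ 1 w S) (hp : p ∈ interior S) :
    gradSq w p = gradInnerWithin S w w p := by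
  have hS := mem_interior_iff_mem_nhds.1 hp
  rw [gradSq_eq_fderiv ((hw.contDiffAt hS).differentiableAt one_ne_zero), gradInnerWithin,
    fderivWithin_of_mem_nhds hS, sq, sq]

lemma lap_eq_lapWithin (hw : ContDiffOn ℝ 2 w S) (hp : p ∈ interior S) :
    lap w p = lapWithin S w p := by
  have hS := mem_interior_iff_mem_nhds.1 hp
  have hwp := hw.contDiffAt hS
  have hfirst : fderivWithin ℝ w S =ᶠ[𝓝 p] fderiv ℝ w := by
    filter_upwards [eventually_mem_nhds_iff.2 hS] with q hq
    exact fderivWithin_of_mem_nhds hq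
  rw [lapWithin, fderivWithin_of_mem_nhds hS, hfirst.fderiv_eq]
  exact congrArg₂ (· + ·)
    (deriv_deriv_comp_of_hasDerivAt_const (hasDerivAt_mk_left p.2) hwp)
    (deriv_deriv_comp_of_hasDerivAt_const (hasDerivAt_mk_right p.1) hwp)

lemma continuousOn_gradInnerWithin (hS : UniqueDiffOn ℝ S) (hu : ContDiffOn ℝ 1 u S)
    (hw : ContDiffOn ℝ 1 w S) : ContinuousOn (gradInnerWithin S u w) S := by
  have hu' := hu.continuousOn_fderivWithin hS le_rfl
  have hw' := hw.continuousOn_fderivWithin hS le_rfl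
  unfold gradInnerWithin
  fun_prop

lemma continuousOn_lapWithin (hS : UniqueDiffOn ℝ S) (hw : ContDiffOn ℝ 2 w S) :
    ContinuousOn (lapWithin S w) S := by
  have hw' := (hw.fderivWithin hS one_add_one_eq_two.le).continuousOn_fderivWithin hS le_rfl
  unfold lapWithin
  fun_prop

lemma continuousOn_mul_lapWithin_add_gradInnerWithin (hS : UniqueDiffOn ℝ S)
    (hu : ContDiffOn ℝ 1 u S) (hw : ContDiffOn ℝ 2 w S) :
    ContinuousOn (fun q => u q * lapWithin S w q + gradInnerWithin S u w q) S :=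
  (hu.continuousOn.mul (continuousOn_lapWithin hS hw)).add
    (continuousOn_gradInnerWithin hS hu (hw.of_le one_le_two))

lemma gradInnerWithin_exp_right (hS : UniqueDiffOn ℝ S) (hv : DifferentiableOn ℝ v S)
    (hp : p ∈ S) :
    gradInnerWithin S u (fun q => Real.exp (v q)) p =
      Real.exp (v p) * gradInnerWithin S u v p := by
  simp only [gradInnerWithin, fderivWithin_exp (hv p hp) (hS p hp), smul_apply,
    smul_eq_mul]
  ring

lemma gradInnerWithin_pow_left (hS : UniqueDiffOn ℝ S) (hu : DifferentiableOn ℝ u S)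
    (hp : p ∈ S) (n : ℕ) :
    gradInnerWithin S (fun q => u q ^ n) w p =
      n * u p ^ (n - 1) * gradInnerWithin S u w p := by
  simp only [gradInnerWithin, fderivWithin_fun_pow (hS p hp) n (hu p hp),
    smul_apply, smul_eq_mul, nsmul_eq_mul]
  ring

lemma lapWithin_exp (hS : UniqueDiffOn ℝ S) (hv : ContDiffOn ℝ 2 v S) (hp : p ∈ S) :
    lapWithin S (fun q => Real.exp (v q)) p =
      Real.exp (v p) * (lapWithin S v p + gradInnerWithin S v v p) := by
  have hv1 := hv.differentiableOn two_ne_zero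
  have hv2 := (hv.fderivWithin hS one_add_one_eq_two.le).differentiableOn one_ne_zero
  have hfirst : EqOn (fderivWithin ℝ (fun q => Real.exp (v q)) S)
      (fun q => Real.exp (v q) • fderivWithin ℝ v S q) S :=
    fun q hq => fderivWithin_exp (hv1 q hq) (hS q hq)
  simp only [lapWithin, gradInnerWithin, fderivWithin_congr hfirst (hfirst hp),
    fderivWithin_fun_smul (hS p hp) (hv1 p hp).exp (hv2 p hp),
    fderivWithin_exp (hv1 p hp) (hS p hp), add_apply, smul_apply,
    ContinuousLinearMap.smulRight_apply, smul_eq_mul]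
  ring

/-! ### Green's identity on a rectangle -/

lemma interior_Icc_prod (a b : ℝ × ℝ) :
    interior (Icc a b) = Ioo a.1 b.1 ×ˢ Ioo a.2 b.2 := by
  rw [Icc_prod_eq, interior_prod_eq, interior_Icc, interior_Icc]

variable {a b : ℝ × ℝ}

lemma uniqueDiffOn_Icc_prod (h₁ : a.1 < b.1) (h₂ : a.2 < b.2) : UniqueDiffOn ℝ (Icc a b) := by
  rw [Icc_prod_eq]
  exact (uniqueDiffOn_Icc h₁).prod (uniqueDiffOn_Icc h₂)

lemma closure_interior_Icc_prod (h₁ : a.1 < b.1) (h₂ : a.2 < b.2) :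
    closure (interior (Icc a b)) = Icc a b := by
  rw [interior_Icc_prod, closure_prod_eq, closure_Ioo h₁.ne, closure_Ioo h₂.ne, ← Icc_prod_eq]

lemma mk_mem_Icc_of_mem_Icc_fst (h₂ : a.2 ≤ b.2) {x : ℝ} (hx : x ∈ Icc a.1 b.1) :
    (x, a.2) ∈ Icc a b :=
  ⟨⟨hx.1, le_rfl⟩, ⟨hx.2, h₂⟩⟩

lemma continuousOn_comp_bottom {X : Type*} [TopologicalSpace X] {f : ℝ × ℝ → X}
    (hf : ContinuousOn f (Icc a b)) (h₂ : a.2 ≤ b.2) :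
    ContinuousOn (fun x => f (x, a.2)) (Icc a.1 b.1) :=
  hf.comp (by fun_prop) fun _ hx => mk_mem_Icc_of_mem_Icc_fst h₂ hx

lemma derivWithin_Ici_eq_fderivWithin_Icc (hw : DifferentiableOn ℝ w (Icc a b)) (h₂ : a.2 < b.2)
    {x : ℝ} (hx : x ∈ Icc a.1 b.1) :
    derivWithin (fun t => w (x, t)) (Ici a.2) a.2 =
      fderivWithin ℝ w (Icc a b) (x, a.2) (0, 1) := by
  have hw_bot := (hw _ (mk_mem_Icc_of_mem_Icc_fst h₂.le hx)).hasFDerivWithinAt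
  have hslice := hw_bot.comp_hasDerivWithinAt a.2
    ((hasDerivAt_mk_right x a.2).hasDerivWithinAt (s := Icc a.2 b.2))
    fun t ht => ⟨⟨hx.1, ht.1⟩, ⟨hx.2, ht.2⟩⟩
  exact (hslice.mono_of_mem_nhdsWithin (Icc_mem_nhdsGE h₂)).derivWithin
    (uniqueDiffOn_Ici _ _ self_mem_Ici)

lemma hasFDerivAt_mul_fderivWithin_apply (hS : UniqueDiffOn ℝ S) (hu : DifferentiableOn ℝ u S)
    (hw : ContDiffOn ℝ 2 w S) (hp : p ∈ interior S) (e : ℝ × ℝ) :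
    HasFDerivAt (fun q => u q * fderivWithin ℝ w S q e)
      (u p • (fderivWithin ℝ (fderivWithin ℝ w S) S p).flip e +
        fderivWithin ℝ w S p e • fderivWithin ℝ u S p) p := by
  have hpS := mem_interior_iff_mem_nhds.1 hp
  have hw' := (hw.fderivWithin hS one_add_one_eq_two.le).differentiableOn one_ne_zero
  have hup := (hu p (mem_of_mem_nhds hpS)).hasFDerivWithinAt
  have hwp := (hw' p (mem_of_mem_nhds hpS)).hasFDerivWithinAt
  refine ((hup.mul (hwp.clm_apply (hasFDerivWithinAt_const e p S))).hasFDerivAt hpS).congr_fderiv ?_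
  ext <;> simp

-- This is the divergence theorem for the field `u ∇w`.
theorem integral_mul_lapWithin_add_gradInnerWithin (h₁ : a.1 < b.1) (h₂ : a.2 < b.2)
    (hu : ContDiffOn ℝ 1 u (Icc a b)) (hw : ContDiffOn ℝ 2 w (Icc a b)) :
    ∫ p in Icc a b, (u p * lapWithin (Icc a b) w p + gradInnerWithin (Icc a b) u w p) =
      (∫ x in a.1..b.1, u (x, b.2) * fderivWithin ℝ w (Icc a b) (x, b.2) (0, 1)) -
        (∫ x in a.1..b.1, u (x, a.2) * fderivWithin ℝ w (Icc a b) (x, a.2) (0, 1)) +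
        (∫ y in a.2..b.2, u (b.1, y) * fderivWithin ℝ w (Icc a b) (b.1, y) (1, 0)) -
        ∫ y in a.2..b.2, u (a.1, y) * fderivWithin ℝ w (Icc a b) (a.1, y) (1, 0) := by
  set S := Icc a b
  have hS : UniqueDiffOn ℝ S := uniqueDiffOn_Icc_prod h₁ h₂
  have hw' := hw.continuousOn_fderivWithin hS one_le_two
  let flux (e p : ℝ × ℝ) : ℝ := u p * fderivWithin ℝ w S p e
  let flux' (e p : ℝ × ℝ) : ℝ × ℝ →L[ℝ] ℝ :=
    u p • (fderivWithin ℝ (fderivWithin ℝ w S) S p).flip e +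
      fderivWithin ℝ w S p e • fderivWithin ℝ u S p
  have hflux (e : ℝ × ℝ) : ContinuousOn (flux e) S :=
    hu.continuousOn.mul (hw'.clm_apply continuousOn_const)
  have hflux' (e p : ℝ × ℝ) (hp : p ∈ Ioo a.1 b.1 ×ˢ Ioo a.2 b.2) :
      HasFDerivAt (flux e) (flux' e p) p :=
    hasFDerivAt_mul_fderivWithin_apply hS (hu.differentiableOn one_ne_zero) hw
      (interior_Icc_prod a b ▸ hp) e
  have hdiv : (fun p => u p * lapWithin S w p + gradInnerWithin S u w p) =
      fun p => flux' (1, 0) p (1, 0) + flux' (0, 1) p (0, 1) := by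
    ext p
    simp only [flux', lapWithin, gradInnerWithin, add_apply, smul_apply,
      ContinuousLinearMap.flip_apply, smul_eq_mul]
    ring
  have hint : IntegrableOn (fun p => u p * lapWithin S w p + gradInnerWithin S u w p) S :=
    (continuousOn_mul_lapWithin_add_gradInnerWithin hS hu hw).integrableOn_compact isCompact_Icc
  rw [hdiv] at hint ⊢
  exact integral_divergence_prod_Icc_of_hasFDerivAt_of_le (flux (1, 0)) (flux (0, 1)) _ _ a b
    ⟨h₁.le, h₂.le⟩ (hflux _) (hflux _) (hflux' _) (hflux' _) hint

lemma integral_mul_lapWithin_add_gradInnerWithin_of_eq_zero (h₁ : a.1 < b.1) (h₂ : a.2 < b.2)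
    (hu : ContDiffOn ℝ 1 u (Icc a b)) (hw : ContDiffOn ℝ 2 w (Icc a b))
    (hu_zero : ∀ p : ℝ × ℝ, p.1 = a.1 ∨ p.1 = b.1 ∨ p.2 = b.2 → u p = 0) :
    ∫ p in Icc a b, (u p * lapWithin (Icc a b) w p + gradInnerWithin (Icc a b) u w p) =
      -∫ x in a.1..b.1, u (x, a.2) * fderivWithin ℝ w (Icc a b) (x, a.2) (0, 1) := by
  have htop (x : ℝ) : u (x, b.2) = 0 := hu_zero _ (.inr (.inr rfl))
  have hright (y : ℝ) : u (b.1, y) = 0 := hu_zero _ (.inr (.inl rfl))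
  have hleft (y : ℝ) : u (a.1, y) = 0 := hu_zero _ (.inl rfl)
  rw [integral_mul_lapWithin_add_gradInnerWithin h₁ h₂ hu hw]
  simp [htop, hright, hleft]

/-! ### The energy estimate for `e^v` -/

lemma gradInnerWithin_quadratic_nonneg (S : Set (ℝ × ℝ)) (u w : ℝ × ℝ → ℝ) (p : ℝ × ℝ) (c d : ℝ) :
    0 ≤ c ^ 2 * gradInnerWithin S w w p + 2 * (c * d) * gradInnerWithin S u w p +
      d ^ 2 * gradInnerWithin S u u p := by
  calc 0 ≤ (c * fderivWithin ℝ w S p (1, 0) + d * fderivWithin ℝ u S p (1, 0)) ^ 2 +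
        (c * fderivWithin ℝ w S p (0, 1) + d * fderivWithin ℝ u S p (0, 1)) ^ 2 := by positivity
    _ = _ := by simp only [gradInnerWithin]; ring

lemma gradInnerWithin_self_nonneg (S : Set (ℝ × ℝ)) (w : ℝ × ℝ → ℝ) (p : ℝ × ℝ) :
    0 ≤ gradInnerWithin S w w p :=
  add_nonneg (mul_self_nonneg _) (mul_self_nonneg _)

lemma mul_le_half_mul_cube_add {ε M x : ℝ} (hε : 0 < ε) (hM : 0 ≤ M) (hx : 0 ≤ x) :
    M * x ≤ ε / 2 * x ^ 3 + M * (1 + 2 * M / ε) := by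
  rcases le_total (2 * M / ε) (x ^ 2) with hlarge | hsmall
  · have hM_le : M ≤ ε / 2 * x ^ 2 := by
      rw [div_le_iff₀ hε] at hlarge
      linarith
    calc M * x ≤ ε / 2 * x ^ 2 * x := by gcongr
      _ = ε / 2 * x ^ 3 := by ring
      _ ≤ _ := le_add_of_nonneg_right (by positivity)
  · have hx_le : x ≤ 1 + 2 * M / ε := by nlinarith [sq_nonneg (x - 1)]
    calc M * x ≤ M * (1 + 2 * M / ε) := by gcongr
      _ ≤ _ := le_add_of_nonneg_left (by positivity)

/-- The density `(e^v |∇v|² + ε e^{3v}) / 2`, which is the part of `Δ(e^v)` left over for a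
subsolution `v` once the cutoff terms have been absorbed. -/
def expEnergyDensity (S : Set (ℝ × ℝ)) (ε : ℝ) (v : ℝ × ℝ → ℝ) (p : ℝ × ℝ) : ℝ :=
  (Real.exp (v p) * gradInnerWithin S v v p + ε * Real.exp (v p) ^ 3) / 2

variable {ε M : ℝ}

lemma expEnergyDensity_nonneg (hε : 0 ≤ ε) : 0 ≤ expEnergyDensity S ε v p := by
  have := gradInnerWithin_self_nonneg S v p
  unfold expEnergyDensity
  positivity

lemma continuousOn_expEnergyDensity (hS : UniqueDiffOn ℝ S) (hv : ContDiffOn ℝ 1 v S) :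
    ContinuousOn (expEnergyDensity S ε v) S := by
  have hgrad := continuousOn_gradInnerWithin hS hv hv
  have hv0 := hv.continuousOn
  unfold expEnergyDensity
  fun_prop

lemma integrableOn_mul_expEnergyDensity (h₁ : a.1 < b.1) (h₂ : a.2 < b.2)
    (hη : ContinuousOn η (Icc a b)) (hv : ContDiffOn ℝ 1 v (Icc a b)) :
    IntegrableOn (fun p => η p * expEnergyDensity (Icc a b) ε v p) (Icc a b) :=
  (hη.mul (continuousOn_expEnergyDensity (uniqueDiffOn_Icc_prod h₁ h₂) hv)).integrableOn_compact
    isCompact_Icc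

lemma cube_mul_expEnergyDensity_sub_le (hS : UniqueDiffOn ℝ S) (hη : DifferentiableOn ℝ η S)
    (hv : ContDiffOn ℝ 2 v S) (hp : p ∈ S) (hε : 0 < ε) (hηp : 0 ≤ η p)
    (hM : η p ^ 2 + 9 / 2 * gradInnerWithin S η η p ≤ M)
    (hlap : ε * Real.exp (2 * v p) - 1 ≤ lapWithin S v p) :
    η p ^ 3 * expEnergyDensity S ε v p - M * (1 + 2 * M / ε) ≤
      η p ^ 3 * lapWithin S (fun q => Real.exp (v q)) p +
        gradInnerWithin S (fun q => η q ^ 3) (fun q => Real.exp (v q)) p := by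
  rw [lapWithin_exp hS hv hp, gradInnerWithin_exp_right hS (hv.differentiableOn two_ne_zero) hp,
    gradInnerWithin_pow_left hS hη hp, expEnergyDensity]
  rw [two_mul, Real.exp_add, ← sq] at hlap
  have hM0 : 0 ≤ M := le_trans (by linarith [sq_nonneg (η p), gradInnerWithin_self_nonneg S η p]) hM
  have he := Real.exp_pos (v p)
  set e := Real.exp (v p)
  -- `|η ∇v + 3 ∇η|² ≥ 0` controls the cross term `3 η² e^v ∇η · ∇v`.
  have hcross := mul_nonneg (mul_nonneg hηp he.le)
    (gradInnerWithin_quadratic_nonneg S η v p (η p) 3)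
  have hcutoff := mul_le_mul_of_nonneg_left hM (mul_nonneg hηp he.le)
  have hyoung := mul_le_half_mul_cube_add hε hM0 (mul_nonneg hηp he.le)
  have hsub := mul_le_mul_of_nonneg_left hlap (by positivity : 0 ≤ η p ^ 3 * e)
  push_cast
  linarith

/-- Cutoff functions on the closed rectangle `[a, b]`: nonnegative `C¹` functions that vanish on all
sides but the bottom one. The bound `M` controls the coefficient of `η e^v` that remains in the
energy estimate after completing a square. -/
structure IsRectCutoff (M : ℝ) (a b : ℝ × ℝ) (η : ℝ × ℝ → ℝ) : Prop where
  contDiffOn : ContDiffOn ℝ 1 η (Icc a b)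
  nonneg : ∀ p ∈ Icc a b, 0 ≤ η p
  eq_zero : ∀ p : ℝ × ℝ, p.1 = a.1 ∨ p.1 = b.1 ∨ p.2 = b.2 → η p = 0
  sq_add_le : ∀ p ∈ Icc a b, η p ^ 2 + 9 / 2 * gradInnerWithin (Icc a b) η η p ≤ M

/-- Subsolutions, on the closed rectangle `[a, b]`, of `Δv = ε e^{2v} - 1` with the Neumann
condition `∂v/∂t = ε e^v` on the bottom side. All derivatives are taken within the rectangle. -/
structure IsRectSubsolution (ε : ℝ) (a b : ℝ × ℝ) (v : ℝ × ℝ → ℝ) : Prop where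
  contDiffOn : ContDiffOn ℝ 2 v (Icc a b)
  le_lapWithin : ∀ p ∈ Icc a b, ε * Real.exp (2 * v p) - 1 ≤ lapWithin (Icc a b) v p
  le_fderivWithin_bottom : ∀ x ∈ Icc a.1 b.1,
    ε * Real.exp (v (x, a.2)) ≤ fderivWithin ℝ v (Icc a b) (x, a.2) (0, 1)

namespace IsRectSubsolution

lemma of_lap_of_derivWithin (h₁ : a.1 < b.1) (h₂ : a.2 < b.2) (hv : ContDiffOn ℝ 2 v (Icc a b))
    (hlap : ∀ p ∈ interior (Icc a b), ε * Real.exp (2 * v p) - 1 ≤ lap v p)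
    (hbot : ∀ x ∈ Icc a.1 b.1,
      ε * Real.exp (v (x, a.2)) ≤ derivWithin (fun t => v (x, t)) (Ici a.2) a.2) :
    IsRectSubsolution ε a b v where
  contDiffOn := hv
  le_lapWithin p hp := by
    have hclosure := closure_interior_Icc_prod h₁ h₂
    have hv0 := hv.continuousOn
    have hlap_cont := continuousOn_lapWithin (uniqueDiffOn_Icc_prod h₁ h₂) hv
    exact le_on_closure (fun q hq => (hlap q hq).trans_eq (lap_eq_lapWithin hv hq))
      (ContinuousOn.mono (by fun_prop) hclosure.subset) (hlap_cont.mono hclosure.subset)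
      (hclosure.superset hp)
  le_fderivWithin_bottom x hx := (hbot x hx).trans_eq
    (derivWithin_Ici_eq_fderivWithin_Icc (hv.differentiableOn two_ne_zero) h₂ hx)

lemma integral_bottom_le (hv : IsRectSubsolution ε a b v) (h₁ : a.1 < b.1) (h₂ : a.2 < b.2)
    (hη : ContinuousOn η (Icc a b)) (hη_nonneg : ∀ p ∈ Icc a b, 0 ≤ η p) :
    ∫ x in a.1..b.1, η (x, a.2) * (ε * Real.exp (v (x, a.2)) ^ 2) ≤
      ∫ x in a.1..b.1, η (x, a.2) *
        fderivWithin ℝ (fun q => Real.exp (v q)) (Icc a b) (x, a.2) (0, 1) := by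
  have hS := uniqueDiffOn_Icc_prod h₁ h₂
  have hη_bot := continuousOn_comp_bottom hη h₂.le
  have hv_bot := continuousOn_comp_bottom hv.contDiffOn.continuousOn h₂.le
  have hderiv_bot := continuousOn_comp_bottom
    (hv.contDiffOn.exp.continuousOn_fderivWithin hS one_le_two) h₂.le
  refine intervalIntegral.integral_mono_on h₁.le
    ((hη_bot.mul (continuousOn_const.mul (hv_bot.rexp.pow 2))).intervalIntegrable_of_Icc h₁.le)
    ((hη_bot.mul (hderiv_bot.clm_apply continuousOn_const)).intervalIntegrable_of_Icc h₁.le)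
    fun x hx => ?_
  have hxS := mk_mem_Icc_of_mem_Icc_fst h₂.le hx
  rw [fderivWithin_exp (hv.contDiffOn.differentiableOn two_ne_zero _ hxS) (hS _ hxS), smul_apply,
    smul_eq_mul, show ε * Real.exp (v (x, a.2)) ^ 2 =
      Real.exp (v (x, a.2)) * (ε * Real.exp (v (x, a.2))) by ring]
  gcongr
  exacts [hη_nonneg _ hxS, hv.le_fderivWithin_bottom x hx]

-- Testing the inequality for `Δ(e^v)` against `η³` makes the cutoff terms of order `η e^v`, which
-- the term `η³ e^{3v}` absorbs.
theorem integral_cube_mul_expEnergyDensity_le (hv : IsRectSubsolution ε a b v)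
    (hη : IsRectCutoff M a b η) (h₁ : a.1 < b.1) (h₂ : a.2 < b.2) (hε : 0 < ε) :
    (∫ p in Icc a b, η p ^ 3 * expEnergyDensity (Icc a b) ε v p) +
        ∫ x in a.1..b.1, η (x, a.2) ^ 3 * (ε * Real.exp (v (x, a.2)) ^ 2) ≤
      M * (1 + 2 * M / ε) * volume.real (Icc a b) := by
  have hS := uniqueDiffOn_Icc_prod h₁ h₂
  have hv2 := hv.contDiffOn
  have hη3 := hη.contDiffOn.pow 3
  have henergy := integrableOn_mul_expEnergyDensity (ε := ε) h₁ h₂ hη3.continuousOn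
    (hv2.of_le one_le_two)
  have hconst : IntegrableOn (fun _ => M * (1 + 2 * M / ε)) (Icc a b) :=
    integrableOn_const isCompact_Icc.measure_lt_top.ne
  have hbulk := setIntegral_mono_on (henergy.sub hconst)
    ((continuousOn_mul_lapWithin_add_gradInnerWithin hS hη3
      hv2.exp).integrableOn_compact isCompact_Icc) measurableSet_Icc fun p hp =>
    cube_mul_expEnergyDensity_sub_le hS (hη.contDiffOn.differentiableOn one_ne_zero) hv2 hp hε
      (hη.nonneg p hp) (hη.sq_add_le p hp) (hv.le_lapWithin p hp)
  have hgreen := integral_mul_lapWithin_add_gradInnerWithin_of_eq_zero h₁ h₂ hη3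
    hv2.exp fun p hp => by simp [hη.eq_zero p hp]
  have hbottom := hv.integral_bottom_le h₁ h₂ hη3.continuousOn
    fun p hp => pow_nonneg (hη.nonneg p hp) 3
  rw [hgreen, integral_sub' henergy hconst, setIntegral_const, smul_eq_mul] at hbulk
  linarith

end IsRectSubsolution

/-! ### Positive parts -/

lemma deriv_max_const {f : ℝ → ℝ} {c x : ℝ} (hf : ContinuousAt f x) :
    deriv (fun y => max (f y) c) x = if c < f x then deriv f x else 0 := by
  split_ifs with hx
  · have hnear : (fun y => max (f y) c) =ᶠ[𝓝 x] f := by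
      filter_upwards [hf.eventually_const_lt hx] with y hy
      exact max_eq_left hy.le
    exact hnear.deriv_eq
  · refine IsLocalMin.deriv_eq_zero (Eventually.of_forall fun y => ?_)
    simp [not_lt.1 hx]

lemma gradSq_max_const {c : ℝ} (hv : ContinuousAt v p) :
    gradSq (fun q => max (v q) c) p = if c < v p then gradSq v p else 0 := by
  have hs : ContinuousAt (fun s => v (s, p.2)) p.1 :=
    hv.comp_of_eq (hasDerivAt_mk_left p.2 p.1).continuousAt rfl
  have ht : ContinuousAt (fun t => v (p.1, t)) p.2 :=
    hv.comp_of_eq (hasDerivAt_mk_right p.1 p.2).continuousAt rfl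
  simp only [gradSq, deriv_max_const hs, deriv_max_const ht]
  split_ifs <;> simp

lemma gradSq_max_zero_le (hv : ContinuousAt v p) :
    gradSq (fun q => max (v q) 0) p ≤ Real.exp (v p) * gradSq v p := by
  have hgrad : 0 ≤ gradSq v p := add_nonneg (sq_nonneg _) (sq_nonneg _)
  rw [gradSq_max_const hv]
  split_ifs with hvp
  · exact le_mul_of_one_le_left hgrad (Real.one_le_exp hvp.le)
  · positivity

lemma max_zero_pow_le_factorial_mul_exp_pow (x : ℝ) {n m : ℕ} (hn : n ≠ 0) (hm : m ≠ 0) :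
    max x 0 ^ n ≤ n.factorial * Real.exp x ^ m := by
  rcases le_total x 0 with hx | hx
  · rw [max_eq_right hx, zero_pow hn]
    positivity
  · rw [max_eq_left hx]
    calc x ^ n ≤ n.factorial * Real.exp x :=
          (div_le_iff₀' (by positivity)).1 (Real.pow_div_factorial_le_exp x hx n)
      _ ≤ n.factorial * Real.exp x ^ m := by
          gcongr
          exact le_self_pow₀ (Real.one_le_exp hx) hm

-- `2 + 48 / ε = 2 * (1 + 4! / ε)`, with `4!` from `x⁴ ≤ 4! e^x`.
lemma gradSq_max_zero_add_le_mul_expEnergyDensity (hε : 0 < ε) (hv : ContDiffOn ℝ 1 v S)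
    (hp : p ∈ interior S) :
    gradSq (fun q => max (v q) 0) p + max (v p) 0 ^ 4 ≤
      (2 + 48 / ε) * expEnergyDensity S ε v p := by
  have hgrad := gradSq_max_zero_le (hv.contDiffAt (mem_interior_iff_mem_nhds.1 hp)).continuousAt
  rw [gradSq_eq_gradInnerWithin hv hp] at hgrad
  have hfour : max (v p) 0 ^ 4 ≤ 24 * Real.exp (v p) ^ 3 := by
    simpa [Nat.factorial] using
      max_zero_pow_le_factorial_mul_exp_pow (v p) four_ne_zero three_ne_zero
  have hslack : 0 ≤ 24 / ε * (Real.exp (v p) * gradInnerWithin S v v p) +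
      ε * Real.exp (v p) ^ 3 := by
    have := gradInnerWithin_self_nonneg S v p
    positivity
  calc gradSq (fun q => max (v q) 0) p + max (v p) 0 ^ 4
      ≤ Real.exp (v p) * gradInnerWithin S v v p + 24 * Real.exp (v p) ^ 3 :=
        add_le_add hgrad hfour
    _ ≤ Real.exp (v p) * gradInnerWithin S v v p + 24 * Real.exp (v p) ^ 3 +
        (24 / ε * (Real.exp (v p) * gradInnerWithin S v v p) + ε * Real.exp (v p) ^ 3) :=
        le_add_of_nonneg_right hslack
    _ = (2 + 48 / ε) * expEnergyDensity S ε v p := by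
        rw [expEnergyDensity]
        field_simp
        ring

lemma max_zero_sq_le_mul_exp_sq (hε : 0 < ε) (x : ℝ) :
    max x 0 ^ 2 ≤ (2 + 48 / ε) * (ε * Real.exp x ^ 2) := by
  calc max x 0 ^ 2 ≤ 2 * Real.exp x ^ 2 := by
        simpa using max_zero_pow_le_factorial_mul_exp_pow x two_ne_zero two_ne_zero
    _ ≤ 2 * Real.exp x ^ 2 + (2 * ε + 46) * Real.exp x ^ 2 :=
        le_add_of_nonneg_right (by positivity)
    _ = (2 + 48 / ε) * (ε * Real.exp x ^ 2) := by
        field_simp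
        ring

lemma setIntegral_le_mul_setIntegral {X : Type*} [MeasurableSpace X] {μ : Measure X}
    {A U : Set X} {f g : X → ℝ} {K : ℝ} (hA : MeasurableSet A) (hU : MeasurableSet U)
    (hAU : A ⊆ U) (hg : IntegrableOn g U μ) (hg_nonneg : ∀ x ∈ U, 0 ≤ g x) (hK : 0 ≤ K)
    (hf_nonneg : ∀ x ∈ A, 0 ≤ f x) (hfg : ∀ x ∈ A, f x ≤ K * g x) :
    ∫ x in A, f x ∂μ ≤ K * ∫ x in U, g x ∂μ := by
  calc ∫ x in A, f x ∂μ ≤ ∫ x in A, K * g x ∂μ :=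
        integral_mono_of_nonneg (ae_restrict_of_forall_mem hA hf_nonneg)
          ((hg.mono_set hAU).const_mul K) (ae_restrict_of_forall_mem hA hfg)
    _ = K * ∫ x in A, g x ∂μ := integral_const_mul _ _
    _ ≤ K * ∫ x in U, g x ∂μ := mul_le_mul_of_nonneg_left
        (setIntegral_mono_set hg (ae_restrict_of_forall_mem hU hg_nonneg) hAU.eventuallyLE) hK

lemma setIntegral_gradSq_max_zero_add_le (h₁ : a.1 < b.1) (h₂ : a.2 < b.2) (hε : 0 < ε)
    (hv : ContDiffOn ℝ 1 v (Icc a b)) (hη : ContinuousOn η (Icc a b))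
    (hη_nonneg : ∀ p ∈ Icc a b, 0 ≤ η p) {A : Set (ℝ × ℝ)} (hA : MeasurableSet A)
    (hA_sub : A ⊆ interior (Icc a b)) (hηA : ∀ p ∈ A, η p = 1) :
    ∫ p in A, (gradSq (fun q => max (v q) 0) p + max (v p) 0 ^ 4) ≤
      (2 + 48 / ε) * ∫ p in Icc a b, η p * expEnergyDensity (Icc a b) ε v p := by
  refine setIntegral_le_mul_setIntegral hA measurableSet_Icc (hA_sub.trans interior_subset)
    (integrableOn_mul_expEnergyDensity h₁ h₂ hη hv)
    (fun p hp => mul_nonneg (hη_nonneg p hp) (expEnergyDensity_nonneg hε.le)) (by positivity)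
    (fun p _ => by unfold gradSq; positivity) fun p hp => ?_
  rw [hηA p hp, one_mul]
  exact gradSq_max_zero_add_le_mul_expEnergyDensity hε hv (hA_sub hp)

lemma setIntegral_max_zero_sq_bottom_le (h₁ : a.1 ≤ b.1) (h₂ : a.2 ≤ b.2) (hε : 0 < ε)
    (hv : ContinuousOn v (Icc a b)) (hη : ContinuousOn η (Icc a b))
    (hη_nonneg : ∀ p ∈ Icc a b, 0 ≤ η p) {I : Set ℝ} (hI : MeasurableSet I)
    (hI_sub : I ⊆ Ioc a.1 b.1) (hηI : ∀ x ∈ I, η (x, a.2) = 1) :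
    ∫ x in I, max (v (x, a.2)) 0 ^ 2 ≤
      (2 + 48 / ε) * ∫ x in a.1..b.1, η (x, a.2) * (ε * Real.exp (v (x, a.2)) ^ 2) := by
  have hη_bot := continuousOn_comp_bottom hη h₂
  have hv_bot := continuousOn_comp_bottom hv h₂
  rw [intervalIntegral.integral_of_le h₁]
  refine setIntegral_le_mul_setIntegral hI measurableSet_Ioc hI_sub
    ((hη_bot.mul (continuousOn_const.mul (hv_bot.rexp.pow 2))).integrableOn_Icc.mono_set
      Ioc_subset_Icc_self)
    (fun x hx => mul_nonneg
      (hη_nonneg _ (mk_mem_Icc_of_mem_Icc_fst h₂ (Ioc_subset_Icc_self hx))) (by positivity))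
    (by positivity) (fun x _ => by positivity) fun x hx => ?_
  rw [hηI x hx, one_mul]
  exact max_zero_sq_le_mul_exp_sq hε _

theorem IsRectSubsolution.setIntegral_gradSq_max_zero_add_setIntegral_bottom_le
    (hv : IsRectSubsolution ε a b v) (hη : IsRectCutoff M a b η) (h₁ : a.1 < b.1)
    (h₂ : a.2 < b.2) (hε : 0 < ε) {A : Set (ℝ × ℝ)} (hA : MeasurableSet A)
    (hA_sub : A ⊆ interior (Icc a b)) (hηA : ∀ p ∈ A, η p = 1) {I : Set ℝ}
    (hI : MeasurableSet I) (hI_sub : I ⊆ Ioc a.1 b.1) (hηI : ∀ x ∈ I, η (x, a.2) = 1) :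
    (∫ p in A, (gradSq (fun q => max (v q) 0) p + max (v p) 0 ^ 4)) +
        ∫ x in I, max (v (x, a.2)) 0 ^ 2 ≤
      (2 + 48 / ε) * (M * (1 + 2 * M / ε) * volume.real (Icc a b)) := by
  have hv1 := hv.contDiffOn.of_le one_le_two
  have hη3 := (hη.contDiffOn.pow 3).continuousOn
  have hη3_nonneg (p : ℝ × ℝ) (hp : p ∈ Icc a b) : 0 ≤ η p ^ 3 := pow_nonneg (hη.nonneg p hp) 3
  have hbulk := setIntegral_gradSq_max_zero_add_le h₁ h₂ hε hv1 hη3 hη3_nonneg hA hA_sub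
    fun p hp => by rw [hηA p hp, one_pow]
  have hbottom := setIntegral_max_zero_sq_bottom_le h₁.le h₂.le hε hv1.continuousOn hη3 hη3_nonneg
    hI hI_sub fun x hx => by rw [hηI x hx, one_pow]
  have henergy := mul_le_mul_of_nonneg_left
    (hv.integral_cube_mul_expEnergyDensity_le hη h₁ h₂ hε) (by positivity : 0 ≤ 2 + 48 / ε)
  linarith

/-! ### Cutoff functions and half-balls -/

lemma exists_isRectCutoff {r ρ : ℝ} (hr : 0 < r) (hrρ : r < ρ) :
    ∃ M η, IsRectCutoff M (-ρ, 0) (ρ, ρ) η ∧ ∀ p : ℝ × ℝ, ‖p‖ ≤ r → η p = 1 := by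
  have hρ : 0 < ρ := hr.trans hrρ
  -- Balls of `ℝ × ℝ` are squares, so this bump function is supported in `[-ρ, ρ]²`.
  let η : ContDiffBump (0 : ℝ × ℝ) := ⟨r, ρ, hr, hrρ⟩
  have hη : ContDiffOn ℝ 1 η (Icc (-ρ, 0) (ρ, ρ)) := η.contDiff.contDiffOn
  have hbound : ContinuousOn
      (fun p => η p ^ 2 + 9 / 2 * gradInnerWithin (Icc (-ρ, 0) (ρ, ρ)) η η p)
      (Icc (-ρ, 0) (ρ, ρ)) :=
    (hη.continuousOn.pow 2).add (continuousOn_const.mul (continuousOn_gradInnerWithin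
      (uniqueDiffOn_Icc_prod (neg_lt_self hρ) hρ) hη hη))
  obtain ⟨M, hM⟩ := isCompact_Icc.bddAbove_image hbound
  refine ⟨M, η, ⟨hη, fun p _ => η.nonneg, fun p hp => η.zero_of_le_dist ?_,
    fun p hp => hM (mem_image_of_mem _ hp)⟩,
    fun p hp => η.one_of_mem_closedBall (mem_closedBall_zero_iff.2 hp)⟩
  rw [dist_zero_right, Prod.norm_def, Real.norm_eq_abs, Real.norm_eq_abs, le_max_iff]
  rcases hp with hp | hp | hp
  · exact .inl (by rw [hp, abs_neg, abs_of_pos hρ])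
  · exact .inl (by rw [hp, abs_of_pos hρ])
  · exact .inr (by rw [hp, abs_of_pos hρ])

lemma norm_le_nrm (p : ℝ × ℝ) : ‖p‖ ≤ nrm p := by
  rw [Prod.norm_def, Real.norm_eq_abs, Real.norm_eq_abs]
  exact max_le (Real.abs_le_sqrt (le_add_of_nonneg_right (sq_nonneg _)))
    (Real.abs_le_sqrt (le_add_of_nonneg_left (sq_nonneg _)))

lemma isOpen_ballPlus (r : ℝ) : IsOpen (ballPlus r) := by
  have hnrm : Continuous nrm := by unfold nrm; fun_prop
  exact (isOpen_lt hnrm continuous_const).inter (isOpen_lt continuous_const continuous_snd)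

lemma ballPlus_subset_interior_Icc {r ρ : ℝ} (hrρ : r ≤ ρ) :
    ballPlus r ⊆ interior (Icc (-ρ, 0) (ρ, ρ)) := by
  rintro p ⟨hp, hp_pos⟩
  have hp_norm := ((norm_le_nrm p).trans_lt hp).trans_le hrρ
  obtain ⟨h1, h2⟩ := max_lt_iff.1 hp_norm
  rw [interior_Icc_prod]
  exact ⟨abs_lt.1 h1, hp_pos, (abs_lt.1 h2).2⟩

lemma nrm_lt_of_mem_Icc {ρ R : ℝ} (hR : 0 < R) (hρR : 2 * ρ ^ 2 < R ^ 2)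
    (hp : p ∈ Icc (-ρ, 0) (ρ, ρ)) : nrm p < R := by
  obtain ⟨⟨hleft, hbottom⟩, hright, htop⟩ := hp
  have h1 : p.1 ^ 2 ≤ ρ ^ 2 := sq_le_sq' hleft hright
  have h2 : p.2 ^ 2 ≤ ρ ^ 2 := pow_le_pow_left₀ hbottom htop 2
  exact (Real.sqrt_lt' hR).2 (by linarith)

theorem energy_bound_negative_region_general (r ε : ℝ) (hr : 0 < r) (hε : 0 < ε) :
    ∃ C : ℝ, ∀ v : ℝ × ℝ → ℝ,
      ContDiffOn ℝ 2 v (cballPlus (2 * r)) →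
      (∀ p ∈ ballPlus (2 * r), ε * Real.exp (2 * v p) - 1 ≤ lap v p) →
      (∀ s : ℝ, |s| < 2 * r →
        ε * Real.exp (v (s, 0)) ≤ derivWithin (fun t => v (s, t)) (Ici 0) 0) →
      (∫ p in ballPlus r, (gradSq (fun q => max (v q) 0) p + max (v p) 0 ^ 4)) +
        (∫ s in Ioo (-r) r, max (v (s, 0)) 0 ^ 2) ≤ C := by
  -- The cutoff lives on `[-ρ, ρ] × [0, ρ]`, which has to fit between the two half-balls.
  obtain ⟨ρ, hrρ, hρr⟩ : ∃ ρ, r < ρ ∧ 2 * ρ ^ 2 < (2 * r) ^ 2 :=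
    ⟨5 / 4 * r, by linarith, by nlinarith⟩
  have hρ : 0 < ρ := hr.trans hrρ
  have hρ_nrm (p : ℝ × ℝ) (hp : p ∈ Icc (-ρ, 0) (ρ, ρ)) : nrm p < 2 * r :=
    nrm_lt_of_mem_Icc (by positivity) hρr hp
  obtain ⟨M, η, hη, hη_one⟩ := exists_isRectCutoff hr hrρ
  refine ⟨(2 + 48 / ε) * (M * (1 + 2 * M / ε) * volume.real (Icc (-ρ, 0) (ρ, ρ))),
    fun v hv hlap hbot => ?_⟩
  have hsub : IsRectSubsolution ε (-ρ, 0) (ρ, ρ) v := by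
    refine .of_lap_of_derivWithin (neg_lt_self hρ) hρ
      (hv.mono fun p hp => ⟨(hρ_nrm p hp).le, hp.1.2⟩) (fun p hp => hlap p ?_) fun s hs => hbot s ?_
    · exact ⟨hρ_nrm p (interior_subset hp), (interior_Icc_prod _ _ ▸ hp).2.1⟩
    · nlinarith [abs_le.2 hs, abs_nonneg s]
  exact hsub.setIntegral_gradSq_max_zero_add_setIntegral_bottom_le hη (neg_lt_self hρ) hρ hε
    (isOpen_ballPlus r).measurableSet (ballPlus_subset_interior_Icc hrρ.le)
    (fun p hp => hη_one p ((norm_le_nrm p).trans hp.1.le)) measurableSet_Ioo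
    (fun s hs => ⟨by linarith [hs.1], by linarith [hs.2]⟩)
    fun s hs => hη_one _ (by simpa [Prod.norm_def, hr.le] using (abs_lt.2 hs).le)

end

/-- **Uniform energy bound where the curvatures are negative** (cf. Lemma 4.2(b)): if
`−Δv = a + F e^{2v}` in `B_{2r}⁺` and `∂v/∂ν = H e^{v}` on `Γ_{2r}` with `|a| ≤ 1`,
`F ≤ −ε`, `H ≤ −ε`, then `∫_{B_r⁺} (|∇v⁺|² + (v⁺)⁴) dx + ∫_{Γ_r} (v⁺)² dl ≤ C(r, ε)`. -/
theorem energy_bound_negative_region (r ε : ℝ) (hr : 0 < r) (hε0 : 0 < ε) (hε1 : ε < 1) :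
    ∃ C : ℝ, ∀ (a F : ℝ × ℝ → ℝ) (H : ℝ → ℝ) (v : ℝ × ℝ → ℝ),
      ContinuousOn a (cballPlus (2 * r)) →
      ContinuousOn F (cballPlus (2 * r)) →
      ContinuousOn H (Set.Icc (-(2 * r)) (2 * r)) →
      (∀ p ∈ cballPlus (2 * r), |a p| ≤ 1) →
      (∀ p ∈ cballPlus (2 * r), F p ≤ -ε) →
      (∀ s ∈ Set.Icc (-(2 * r)) (2 * r), H s ≤ -ε) →
      ContDiffOn ℝ 2 v (cballPlus (2 * r)) →
      (∀ p ∈ ballPlus (2 * r), -lap v p = a p + F p * Real.exp (2 * v p)) →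
      (∀ s : ℝ, |s| < 2 * r →
        -derivWithin (fun t => v (s, t)) (Set.Ici 0) 0 = H s * Real.exp (v (s, 0))) →
      (∫ p in ballPlus r, (gradSq (fun q => max (v q) 0) p + max (v p) 0 ^ 4)) +
        (∫ s in Set.Ioo (-r) r, max (v (s, 0)) 0 ^ 2) ≤ C := by
  obtain ⟨C, hC⟩ := energy_bound_negative_region_general r ε hr hε0
  refine ⟨C, fun a F H v _ _ _ ha hF hH hv hlap hbot => hC v hv (fun p hp => ?_) fun s hs => ?_⟩
  · have hp' : p ∈ cballPlus (2 * r) := ⟨hp.1.le, hp.2.le⟩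
    nlinarith [hlap p hp, (abs_le.1 (ha p hp')).2, hF p hp', Real.exp_pos (2 * v p)]
  · nlinarith [hbot s hs, hH s (abs_le.1 hs.le), Real.exp_pos (v (s, 0))]
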